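/- A point x* ∈ ℝ is a stationary point of the kernel density estimate (f'(x*) = 0) if and only if x* is a fixed point of the mean shift map, i.e., x* = (Σ_{i=1}^n x_i g(((x* - x_i)/h)²)) / (Σ_{i=1}^n g(((x* - x_i)/h)²)). -/

import Mathlib

open Finset

/-!
The chain rule applied to `‖z - y‖²` shows that the gradient of the density estimate at `z` is
`2 a / h²` times `∑ i, wᵢ • (xᵢ - z)`, where `wᵢ = g ((‖z - xᵢ‖ / h)²)`. When the total weight is
nonzero, this sum vanishes exactly when `z` is the weighted mean of the `xᵢ`.
-/

section CenterMass

variable {R E ι : Type*} [Field R] [AddCommGroup E] [Module R E]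

theorem centerMass_eq_iff_sum_smul_sub_eq_zero {s : Finset ι} {w : ι → R} (hw : ∑ i ∈ s, w i ≠ 0)
    (x : ι → E) (z : E) : s.centerMass w x = z ↔ ∑ i ∈ s, w i • (x i - z) = 0 := by
  simp only [Finset.centerMass, inv_smul_eq_iff₀ hw, smul_sub, sum_sub_distrib, ← sum_smul,
    sub_eq_zero]

end CenterMass

theorem fderiv_eq_zero_iff_deriv_eq_zero {𝕜 F : Type*} [NontriviallyNormedField 𝕜]
    [NormedAddCommGroup F] [NormedSpace 𝕜 F] {f : 𝕜 → F} {x : 𝕜} :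
    fderiv 𝕜 f x = 0 ↔ deriv f x = 0 := by
  rw [← toSpanSingleton_deriv, ← ContinuousLinearMap.toSpanSingleton_zero 𝕜,
    ContinuousLinearMap.toSpanSingleton_inj]

section MeanShift

variable {ι E : Type*} [Fintype ι] [NormedAddCommGroup E]

/-- The kernel density estimate with profile `k`, bandwidth `h` and sample points `x i`. The factor
`a` stands for the whole normalization, which is `c / (n * h ^ d)` for `n` points in dimension
`d`. -/
noncomputable def kernelDensityEstimate (a h : ℝ) (k : ℝ → ℝ) (x : ι → E) (z : E) : ℝ :=
  a * ∑ i, k ((‖z - x i‖ / h) ^ 2)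

/-- The weight of the sample point `x i` in the mean shift step from `z`. In the applications
`g` is the negative derivative of the profile. -/
noncomputable def meanShiftWeight (g : ℝ → ℝ) (h : ℝ) (x : ι → E) (z : E) (i : ι) : ℝ :=
  g ((‖z - x i‖ / h) ^ 2)

/-- The mean shift map: it sends `z` to the mean of the sample points with the weights
`meanShiftWeight g h x z`. The value is `0` when these weights sum to `0`. -/
noncomputable def meanShift [Module ℝ E] (g : ℝ → ℝ) (h : ℝ) (x : ι → E) (z : E) : E :=
  univ.centerMass (meanShiftWeight g h x z) x

theorem kernelDensityEstimate_real (a h : ℝ) (k : ℝ → ℝ) (x : ι → ℝ) (z : ℝ) :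
    kernelDensityEstimate a h k x z = a * ∑ i, k (((z - x i) / h) ^ 2) := by
  simp only [kernelDensityEstimate, div_pow, Real.norm_eq_abs, sq_abs]

theorem meanShift_real (g : ℝ → ℝ) (h : ℝ) (x : ι → ℝ) (z : ℝ) :
    meanShift g h x z =
      (∑ i, x i * g (((z - x i) / h) ^ 2)) / ∑ i, g (((z - x i) / h) ^ 2) := by
  simp only [meanShift, Finset.centerMass, meanShiftWeight, div_pow, Real.norm_eq_abs, sq_abs,
    smul_eq_mul, inv_mul_eq_div, mul_comm]

theorem sum_meanShiftWeight_pos [Nonempty ι] {g : ℝ → ℝ} (hg : ∀ t ∈ Set.Ici (0 : ℝ), 0 < g t)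
    (h : ℝ) (x : ι → E) (z : E) : 0 < ∑ i, meanShiftWeight g h x z i :=
  sum_pos (fun _ _ => hg _ (Set.mem_Ici.mpr (sq_nonneg _))) univ_nonempty

variable [InnerProductSpace ℝ E]

theorem hasFDerivAt_comp_norm_sub_div_sq {k : ℝ → ℝ} {k' h : ℝ} {y z : E}
    (hk : HasDerivWithinAt k k' (Set.Ici 0) ((‖z - y‖ / h) ^ 2)) :
    HasFDerivAt (fun z => k ((‖z - y‖ / h) ^ 2)) ((2 / h ^ 2 * k') • innerSL ℝ (z - y)) z := by
  have hsq : HasFDerivAt (fun z => (‖z - y‖ / h) ^ 2) ((2 / h ^ 2) • innerSL ℝ (z - y)) z := by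
    have hnorm := ((hasFDerivAt_id z).sub_const y).norm_sq.mul_const (h ^ 2)⁻¹
    simpa [div_pow, div_eq_mul_inv, mul_pow, smul_smul, mul_comm,
      ← Nat.cast_smul_eq_nsmul ℝ] using hnorm
  have hcomp := hk.comp_hasFDerivAt z hsq (.of_forall fun _ => sq_nonneg _)
  rwa [smul_smul, mul_comm k'] at hcomp

theorem hasFDerivAt_kernelDensityEstimate {k : ℝ → ℝ} {h : ℝ} {x : ι → E} {z : E} {k' : ι → ℝ}
    (hk : ∀ i, HasDerivWithinAt k (k' i) (Set.Ici 0) ((‖z - x i‖ / h) ^ 2)) (a : ℝ) :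
    HasFDerivAt (kernelDensityEstimate a h k x)
      ((a * (2 / h ^ 2)) • innerSL ℝ (∑ i, k' i • (z - x i))) z := by
  have hsum : (a * (2 / h ^ 2)) • innerSL ℝ (∑ i, k' i • (z - x i)) =
      a • ∑ i, (2 / h ^ 2 * k' i) • innerSL ℝ (z - x i) := by
    simp only [map_sum, map_smul, mul_smul, smul_sum]
  rw [hsum]
  exact (HasFDerivAt.fun_sum fun i _ => hasFDerivAt_comp_norm_sub_div_sq (hk i)).const_mul a

theorem mean_shift_stationary_iff_fixed_point_general {a h : ℝ} (ha : a ≠ 0) (hh : h ≠ 0)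
    {k g : ℝ → ℝ} (hk : ∀ t ∈ Set.Ici (0 : ℝ), HasDerivWithinAt k (-g t) (Set.Ici 0) t)
    {x : ι → E} {z : E} (hw : ∑ i, meanShiftWeight g h x z i ≠ 0) :
    fderiv ℝ (kernelDensityEstimate a h k x) z = 0 ↔ Function.IsFixedPt (meanShift g h x) z := by
  have hfderiv : fderiv ℝ (kernelDensityEstimate a h k x) z =
      (a * (2 / h ^ 2)) • innerSL ℝ (∑ i, meanShiftWeight g h x z i • (x i - z)) := by
    have hderiv := hasFDerivAt_kernelDensityEstimate (x := x) (z := z)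
      (fun i => hk _ (Set.mem_Ici.mpr (sq_nonneg (‖z - x i‖ / h)))) a
    simpa only [meanShiftWeight, neg_smul, ← smul_neg, neg_sub] using hderiv.fderiv
  have hscale : a * (2 / h ^ 2) ≠ 0 := by positivity
  rw [hfderiv, smul_eq_zero_iff_right hscale, ← norm_eq_zero, innerSL_apply_norm, norm_eq_zero]
  exact (centerMass_eq_iff_sum_smul_sub_eq_zero hw x z).symm

end MeanShift

theorem mean_shift_stationary_iff_fixed_point
(n : ℕ) (hn : 0 < n) (x : Fin n → ℝ) (h : ℝ) (hh : 0 < h)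
    (c : ℝ) (hc : 0 < c)
    (k g : ℝ → ℝ)
    (hk_nonneg : ∀ t ∈ Set.Ici (0:ℝ), 0 ≤ k t)
    (hk_diff : Differentiable ℝ k)
    (hg : ∀ t, g t = -(deriv k t))
    (hg_pos : ∀ t ∈ Set.Ici (0:ℝ), 0 < g t)
    (f : ℝ → ℝ)
    (hf : ∀ z, f z = c / (n * h) * ∑ i, k (((z - x i) / h) ^ 2))
    (xstar : ℝ) :
    deriv f xstar = 0 ↔
      xstar = (∑ i, x i * g (((xstar - x i) / h) ^ 2)) /
        (∑ i, g (((xstar - x i) / h) ^ 2)) := by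
  have : Nonempty (Fin n) := Fin.pos_iff_nonempty.mp hn
  have hk (t : ℝ) : HasDerivAt k (-g t) t := by
    simpa only [hg, neg_neg] using (hk_diff t).hasDerivAt
  obtain rfl : f = kernelDensityEstimate (c / (n * h)) h k x :=
    funext fun z => (hf z).trans (kernelDensityEstimate_real ..).symm
  rw [← meanShift_real, eq_comm (a := xstar), ← fderiv_eq_zero_iff_deriv_eq_zero]
  exact mean_shift_stationary_iff_fixed_point_general (by positivity) hh.ne'
    (fun t _ => (hk t).hasDerivWithinAt) (sum_meanShiftWeight_pos hg_pos h x xstar).ne'
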